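/- Let ξ, η, σ ∈ ℂ with Re(ξ²) > 0, Re(η²) > 0, and |Re σ| < 3/4. Then ξη · K₁((ξ² + η²)/4) = (2^{1/2}(ξ² + η²)/(π i)) ∫_{σ−i∞}^{σ+i∞} Γ(3/4 − s) Γ(3/4 + s) D_{2s−1/2}(ξ) D_{−2s−1/2}(η) ds. (Note that Re((ξ²+η²)/4) > 0, so all functions appearing are in the domains of the stated representations.) -/

import Mathlib

/-- Confluent hypergeometric function of the second kind via its Laplace-transform
representation, valid for `Re a > 0`, `Re z > 0` (principal branch powers). -/
noncomputable def hypU (a b z : ℂ) : ℂ :=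
  (Complex.Gamma a)⁻¹ *
    ∫ t in Set.Ioi (0 : ℝ), Complex.exp (-z * t) * (t : ℂ) ^ (a - 1) * ((1 : ℂ) + t) ^ (b - a - 1)

/-- Parabolic cylinder function `D_ν(z) = 2^{(ν-1)/2} e^{-z²/4} z U((1-ν)/2, 3/2, z²/2)`,
valid for `Re ν < 1`, `Re(z²) > 0` (principal branch powers). -/
noncomputable def parD (ν z : ℂ) : ℂ :=
  (2 : ℂ) ^ ((ν - 1) / 2) * Complex.exp (-z ^ 2 / 4) * z * hypU ((1 - ν) / 2) (3 / 2) (z ^ 2 / 2)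

/-- Order-one modified Bessel function of the second kind,
`K₁(z) = √π e^{-z} (2z) U(3/2, 3, 2z)`, valid for `Re z > 0`. -/
noncomputable def besselK1 (z : ℂ) : ℂ :=
  (Real.sqrt Real.pi : ℂ) * Complex.exp (-z) * (2 * z) * hypU (3 / 2) 3 (2 * z)

/-!
The substitution `u = t / (1 + t)` turns the Laplace integral for `Γ(a) U(a, b, z)` into the Mellin
transform at `a` of the kernel `k_{b,z}(u) = e^{-zu/(1-u)} (1 - u)^{-b}` on `(0, 1)`, which is
bounded when `Re z > 0`. Kernels multiply by adding their parameters,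
`k_{b,z} k_{d,w} = k_{b+d,z+w}`, so Parseval's formula for the Mellin transform gives
`∫ Γ(a - iτ) U(a - iτ, b, z) Γ(c + iτ) U(c + iτ, d, w) dτ = 2π Γ(a + c) U(a + c, b + d, z + w)`.
With `a = 3/4 - σ`, `c = 3/4 + σ`, `b = d = 3/2`, `z = ξ²/2` and `w = η²/2`, the left-hand side is
the integral of parabolic cylinder functions and the right-hand side contains `U(3/2, 3, ·)`,
that is, `K₁`.
-/

open MeasureTheory Set Filter Asymptotics
open scoped FourierTransform Real Topology

section Plancherel

variable {E F : Type*} [NormedAddCommGroup E] [InnerProductSpace ℝ E] [FiniteDimensional ℝ E]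
  [MeasurableSpace E] [BorelSpace E]
  [NormedAddCommGroup F] [InnerProductSpace ℂ F] [CompleteSpace F]

-- Both sides are the same tempered distribution, hence agree on test functions.
theorem fourier_toLp_ae_eq {f : E → F} (hf : Integrable f) (hf₂ : MemLp f 2) :
    (𝓕 hf₂.toLp : Lp F 2 (volume : Measure E)) =ᵐ[volume] 𝓕 f := by
  have hcont : Continuous (𝓕 f) :=
    VectorFourier.fourierIntegral_continuous Real.continuous_fourierChar continuous_inner hf
  refine ae_eq_of_integral_contDiff_smul_eq
    ((Lp.memLp _).locallyIntegrable one_le_two) hcont.locallyIntegrable fun g hg hg_supp ↦ ?_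
  have hφ_supp : HasCompactSupport (Complex.ofRealCLM ∘ g) := hg_supp.comp_left rfl
  let φ : SchwartzMap E ℂ := hφ_supp.toSchwartzMap (by fun_prop)
  calc ∫ x, g x • (𝓕 hf₂.toLp : Lp F 2 (volume : Measure E)) x
      = Lp.toTemperedDistribution (𝓕 hf₂.toLp) φ := by simp [φ]
    _ = ∫ x, 𝓕 φ x • hf₂.toLp f x := by
      rw [← Lp.fourier_toTemperedDistribution_eq, TemperedDistribution.fourier_apply,
        Lp.toTemperedDistribution_apply]
    _ = ∫ x, 𝓕 φ x • f x :=
      integral_congr_ae (hf₂.coeFn_toLp.mono fun x hx ↦ by simp only [hx])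
    _ = ∫ x, φ x • 𝓕 f x := by
      simpa using! VectorFourier.integral_fourierIntegral_smul_eq_flip (L := innerₗ E)
        Real.continuous_fourierChar continuous_inner φ.integrable hf
    _ = ∫ x, g x • 𝓕 f x := by simp [φ]

theorem integral_inner_fourier_fourier {f g : E → F} (hf : Integrable f) (hf₂ : MemLp f 2)
    (hg : Integrable g) (hg₂ : MemLp g 2) :
    ∫ w, inner ℂ (𝓕 f w) (𝓕 g w) = ∫ x, inner ℂ (f x) (g x) := by
  have h := Lp.inner_fourier_eq hf₂.toLp hg₂.toLp
  rw [L2.inner_def, L2.inner_def] at h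
  convert h using 1 <;> refine integral_congr_ae ?_
  · filter_upwards [fourier_toLp_ae_eq hf hf₂, fourier_toLp_ae_eq hg hg₂] with w hfw hgw
    rw [hfw, hgw]
  · filter_upwards [hf₂.coeFn_toLp, hg₂.coeFn_toLp] with x hfx hgx
    rw [hfx, hgx]

theorem fourierInv_eq_conj_fourier_conj (f : E → ℂ) (w : E) :
    𝓕⁻ f w = starRingEnd ℂ (𝓕 (fun x ↦ starRingEnd ℂ (f x)) w) := by
  rw [Real.fourierInv_eq', Real.fourier_eq', ← integral_conj]
  simp [← Complex.exp_conj, Complex.conj_ofNat]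

theorem integral_fourierInv_mul_fourier {f g : E → ℂ} (hf : Integrable f) (hf₂ : MemLp f 2)
    (hg : Integrable g) (hg₂ : MemLp g 2) :
    ∫ w, 𝓕⁻ f w * 𝓕 g w = ∫ x, f x * g x := by
  have h := integral_inner_fourier_fourier (f := fun x ↦ starRingEnd ℂ (f x))
    (Complex.conjLIE.integrable_comp_iff.2 hf) hf₂.star hg hg₂
  simpa [mul_comm, fourierInv_eq_conj_fourier_conj] using h

end Plancherel

section Mellin

variable {E : Type*} [NormedAddCommGroup E] [NormedSpace ℂ E]

theorem image_exp_neg_univ : (fun u : ℝ ↦ rexp (-u)) '' univ = Ioi 0 := by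
  rw [image_univ, ← Real.range_exp]
  exact neg_surjective.range_comp Real.exp

theorem injective_exp_neg : Function.Injective fun u : ℝ ↦ rexp (-u) :=
  Real.exp_injective.comp neg_injective

theorem hasDerivAt_exp_neg (u : ℝ) : HasDerivAt (fun u : ℝ ↦ rexp (-u)) (-rexp (-u)) u := by
  simpa using (hasDerivAt_neg u).exp

/-- The integrand of `mellin f s` in the additive variable `u = -log t`, so that Mellin transforms
along a vertical line become Fourier transforms. -/
noncomputable def mellinPullback (f : ℝ → E) (s : ℂ) (u : ℝ) : E :=
  Complex.exp (-s * u) • f (rexp (-u))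

theorem abs_deriv_smul_cpow_smul_exp_neg (f : ℝ → E) (s : ℂ) (u : ℝ) :
    |-rexp (-u)| • (rexp (-u) : ℂ) ^ (s - 1) • f (rexp (-u)) = mellinPullback f s u := by
  rw [abs_neg, Real.abs_exp, ← Complex.coe_smul, smul_smul, Complex.cpow_def_of_ne_zero (by simp),
    ← Complex.ofReal_log (Real.exp_pos _).le, Real.log_exp, Complex.ofReal_exp, ← Complex.exp_add,
    mellinPullback]
  congr 2
  push_cast
  ring

theorem mellinConvergent_iff_integrable_mellinPullback (f : ℝ → E) (s : ℂ) :
    MellinConvergent f s ↔ Integrable (mellinPullback f s) := by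
  rw [MellinConvergent, ← image_exp_neg_univ, integrableOn_image_iff_integrableOn_abs_deriv_smul
    MeasurableSet.univ (fun u _ ↦ (hasDerivAt_exp_neg u).hasDerivWithinAt) injective_exp_neg.injOn,
    integrableOn_univ]
  simp_rw [abs_deriv_smul_cpow_smul_exp_neg]

theorem mellin_eq_integral_mellinPullback (f : ℝ → E) (s : ℂ) :
    mellin f s = ∫ u, mellinPullback f s u := by
  rw [mellin, ← image_exp_neg_univ, integral_image_eq_integral_abs_deriv_smul
    MeasurableSet.univ (fun u _ ↦ (hasDerivAt_exp_neg u).hasDerivWithinAt) injective_exp_neg.injOn,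
    setIntegral_univ]
  simp_rw [abs_deriv_smul_cpow_smul_exp_neg]

theorem mellin_add_mul_I_eq_fourier (f : ℝ → E) (s : ℂ) (τ : ℝ) :
    mellin f (s + τ * Complex.I) = 𝓕 (mellinPullback f s) (τ / (2 * π)) := by
  rw [mellin_eq_integral_mellinPullback, Real.fourier_real_eq_integral_exp_smul]
  congr with u
  rw [mellinPullback, mellinPullback, smul_smul, ← Complex.exp_add]
  congr 2
  push_cast
  field_simp
  ring

theorem mellin_sub_mul_I_eq_fourierInv (f : ℝ → E) (s : ℂ) (τ : ℝ) :
    mellin f (s - τ * Complex.I) = 𝓕⁻ (mellinPullback f s) (τ / (2 * π)) := by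
  rw [Real.fourierInv_eq_fourier_neg, ← neg_div, ← mellin_add_mul_I_eq_fourier]
  push_cast
  rw [neg_mul, sub_eq_add_neg]

theorem memLp_two_mellinPullback {f : ℝ → E} {s : ℂ} (hf : MellinConvergent f s)
    (hf₂ : MellinConvergent (fun t ↦ (‖f t‖ ^ 2 : ℂ)) (2 * s.re)) :
    MemLp (mellinPullback f s) 2 := by
  rw [mellinConvergent_iff_integrable_mellinPullback] at hf hf₂
  refine (memLp_two_iff_integrable_sq_norm hf.aestronglyMeasurable).2 <|
    hf₂.norm.congr (.of_forall fun u ↦ ?_)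
  simp [mellinPullback, norm_smul, Complex.norm_exp, mul_pow, ← Real.exp_nat_mul, mul_assoc]

theorem mellinPullback_mul (f g : ℝ → ℂ) (a b : ℂ) (u : ℝ) :
    mellinPullback f a u * mellinPullback g b u =
      mellinPullback (fun t ↦ f t * g t) (a + b) u := by
  simp_rw [mellinPullback, smul_eq_mul, neg_add, add_mul, Complex.exp_add]
  ring

theorem integral_mellin_mul_mellin {f g : ℝ → ℂ} {a b : ℂ}
    (hf : MellinConvergent f a) (hf₂ : MellinConvergent (fun t ↦ (‖f t‖ ^ 2 : ℂ)) (2 * a.re))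
    (hg : MellinConvergent g b) (hg₂ : MellinConvergent (fun t ↦ (‖g t‖ ^ 2 : ℂ)) (2 * b.re)) :
    ∫ τ : ℝ, mellin f (a - τ * Complex.I) * mellin g (b + τ * Complex.I) =
      2 * π * mellin (fun t ↦ f t * g t) (a + b) := by
  set F := mellinPullback f a
  set G := mellinPullback g b
  calc ∫ τ : ℝ, mellin f (a - τ * Complex.I) * mellin g (b + τ * Complex.I)
      = ∫ τ : ℝ, 𝓕⁻ F (τ / (2 * π)) * 𝓕 G (τ / (2 * π)) := by
        simp_rw [mellin_sub_mul_I_eq_fourierInv, mellin_add_mul_I_eq_fourier, F, G]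
    _ = 2 * π * ∫ w, 𝓕⁻ F w * 𝓕 G w := by
        rw [Measure.integral_comp_div fun w ↦ 𝓕⁻ F w * 𝓕 G w, abs_of_pos Real.two_pi_pos,
          Complex.real_smul]
        push_cast
        rfl
    _ = 2 * π * ∫ u, F u * G u := by
        rw [integral_fourierInv_mul_fourier
          ((mellinConvergent_iff_integrable_mellinPullback f a).1 hf)
          (memLp_two_mellinPullback hf hf₂)
          ((mellinConvergent_iff_integrable_mellinPullback g b).1 hg)
          (memLp_two_mellinPullback hg hg₂)]
    _ = 2 * π * mellin (fun t ↦ f t * g t) (a + b) := by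
        simp_rw [mellin_eq_integral_mellinPullback, F, G, mellinPullback_mul]

theorem mellinConvergent_of_norm_le {f : ℝ → E} {C : ℝ} {s : ℂ} (hf : AEStronglyMeasurable f)
    (hC : ∀ t, ‖f t‖ ≤ C) (hsupp : ∀ t, 1 < t → f t = 0) (hs : 0 < s.re) :
    MellinConvergent f s := by
  have h_loc : LocallyIntegrableOn f (Ioi 0) :=
    ((memLp_top_of_bound hf C (.of_forall hC)).locallyIntegrable le_top).locallyIntegrableOn _
  have h_top : f =O[atTop] (· ^ (-(s.re + 1)) : ℝ → ℝ) :=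
    EventuallyEq.trans_isBigO ((eventually_gt_atTop 1).mono hsupp) (isBigO_zero _ _)
  have h_zero : f =O[𝓝[>] 0] (· ^ (-0 : ℝ) : ℝ → ℝ) :=
    .of_bound C (.of_forall fun t ↦ by simpa using hC t)
  exact mellinConvergent_of_isBigO_rpow h_loc h_top (lt_add_one _) h_zero hs

end Mellin

section Kernel

/-- The function on `(0, 1)`, extended by zero, whose Mellin transform is `a ↦ Γ(a) U(a, b, z)`:
it is `t ↦ e^{-zt} (1 + t)^b` in the variable `u = t / (1 + t)`. -/
noncomputable def hypUKernel (b z : ℂ) : ℝ → ℂ :=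
  (Ioo 0 1).indicator fun u ↦ Complex.exp (-z * (u / (1 - u))) * (1 - u : ℂ) ^ (-b)

theorem hypUKernel_mul (b c z w : ℂ) (u : ℝ) :
    hypUKernel b z u * hypUKernel c w u = hypUKernel (b + c) (z + w) u := by
  by_cases hu : u ∈ Ioo 0 1
  · have h_ne : (1 - u : ℂ) ≠ 0 := sub_ne_zero.2 (by exact_mod_cast hu.2.ne')
    simp only [hypUKernel, indicator_of_mem hu, neg_add, add_mul, Complex.exp_add,
      Complex.cpow_add _ _ h_ne]
    ring
  · simp [hypUKernel, hu]

theorem measurable_hypUKernel (b z : ℂ) : Measurable (hypUKernel b z) :=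
  Measurable.indicator (by fun_prop) measurableSet_Ioo

theorem hypUKernel_of_one_lt (b z : ℂ) {u : ℝ} (hu : 1 < u) : hypUKernel b z u = 0 :=
  indicator_of_notMem (fun h ↦ hu.not_gt h.2) _

theorem exists_rpow_le_mul_exp (r : ℝ) {x : ℝ} (hx : 0 < x) :
    ∃ C, 0 ≤ C ∧ ∀ v, 1 ≤ v → v ^ r ≤ C * rexp (x * v) := by
  obtain ⟨n, hn⟩ := exists_nat_ge r
  refine ⟨n.factorial / x ^ n, by positivity, fun v hv ↦ ?_⟩
  have h_exp := Real.pow_div_factorial_le_exp (x * v) (by positivity) n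
  calc v ^ r ≤ v ^ n := by simpa using Real.rpow_le_rpow_of_exponent_le hv hn
    _ = n.factorial / x ^ n * ((x * v) ^ n / n.factorial) := by rw [mul_pow]; field_simp
    _ ≤ n.factorial / x ^ n * rexp (x * v) := by gcongr

theorem exists_norm_hypUKernel_le (b : ℂ) {z : ℂ} (hz : 0 < z.re) :
    ∃ C, ∀ u, ‖hypUKernel b z u‖ ≤ C := by
  obtain ⟨C, hC₀, hC⟩ := exists_rpow_le_mul_exp b.re hz
  refine ⟨C * rexp z.re, fun u ↦ ?_⟩
  by_cases hu : u ∈ Ioo 0 1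
  · have h_pos : 0 < 1 - u := sub_pos.2 hu.2
    have h_div : (u / (1 - u) : ℂ) = (u / (1 - u) : ℝ) := by push_cast; rfl
    have h_exp : -z.re * (u / (1 - u)) = z.re - z.re * (1 - u)⁻¹ := by field_simp; ring
    calc ‖hypUKernel b z u‖
        = rexp (-z.re * (u / (1 - u))) * ((1 - u)⁻¹) ^ b.re := by
          rw [hypUKernel, indicator_of_mem hu, norm_mul, Complex.norm_exp,
            Real.inv_rpow h_pos.le, ← Real.rpow_neg h_pos.le]
          congr 1
          · rw [h_div, Complex.re_mul_ofReal, Complex.neg_re]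
          · exact_mod_cast Complex.norm_cpow_eq_rpow_re_of_pos h_pos _
      _ ≤ rexp (-z.re * (u / (1 - u))) * (C * rexp (z.re * (1 - u)⁻¹)) := by
          gcongr
          exact hC _ (one_le_inv₀ h_pos |>.2 (by linarith [hu.1]))
      _ = C * rexp z.re := by
          rw [h_exp, mul_left_comm, ← Real.exp_add, sub_add_cancel]
  · simpa [hypUKernel, hu] using by positivity

theorem mellinConvergent_hypUKernel (b : ℂ) {a z : ℂ} (ha : 0 < a.re) (hz : 0 < z.re) :
    MellinConvergent (hypUKernel b z) a :=
  have ⟨_, hC⟩ := exists_norm_hypUKernel_le b hz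
  mellinConvergent_of_norm_le (measurable_hypUKernel b z).aestronglyMeasurable hC
    (fun _ ↦ hypUKernel_of_one_lt b z) ha

theorem mellinConvergent_norm_hypUKernel_sq (b : ℂ) {a z : ℂ} (ha : 0 < a.re) (hz : 0 < z.re) :
    MellinConvergent (fun u ↦ (‖hypUKernel b z u‖ ^ 2 : ℂ)) a := by
  obtain ⟨C, hC⟩ := exists_norm_hypUKernel_le b hz
  have h_meas := measurable_hypUKernel b z
  refine mellinConvergent_of_norm_le (C := C ^ 2) (by fun_prop) (fun u ↦ ?_)
    (fun u hu ↦ by simp [hypUKernel_of_one_lt b z hu]) ha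
  rw [norm_pow, Complex.norm_real, norm_norm]
  gcongr
  exact hC u

theorem image_div_one_add_Ioi : (fun t : ℝ ↦ t / (1 + t)) '' Ioi 0 = Ioo 0 1 := by
  ext u
  constructor
  · rintro ⟨t, ht, rfl⟩
    rw [mem_Ioi] at ht
    exact ⟨by positivity, (div_lt_one (by positivity)).2 (by linarith)⟩
  · rintro ⟨hu₀, hu₁⟩
    have h_pos : 0 < 1 - u := sub_pos.2 hu₁
    refine ⟨u / (1 - u), div_pos hu₀ h_pos, ?_⟩
    field_simp
    ring

theorem injOn_div_one_add_Ioi : InjOn (fun t : ℝ ↦ t / (1 + t)) (Ioi 0) := by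
  intro s hs t ht h
  rw [mem_Ioi] at hs ht
  field_simp at h
  linarith

theorem hasDerivAt_div_one_add {t : ℝ} (ht : 1 + t ≠ 0) :
    HasDerivAt (fun t : ℝ ↦ t / (1 + t)) (((1 + t) ^ 2)⁻¹) t := by
  refine ((hasDerivAt_id t).div ((hasDerivAt_id t).const_add 1) ht).congr_deriv ?_
  simp

theorem hypUKernel_div_one_add (b z : ℂ) {t : ℝ} (ht : 0 < t) :
    hypUKernel b z (t / (1 + t)) = Complex.exp (-z * t) * ((1 + t : ℝ) : ℂ) ^ b := by
  have h_mem : t / (1 + t) ∈ Ioo (0 : ℝ) 1 := image_div_one_add_Ioi ▸ mem_image_of_mem _ ht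
  have h_sub : (1 - (t / (1 + t) : ℝ) : ℂ) = ((1 + t)⁻¹ : ℝ) := by
    norm_cast
    field_simp
    ring
  have h_div : ((t / (1 + t) : ℝ) : ℂ) / ((1 + t)⁻¹ : ℝ) = t := by
    norm_cast
    field_simp
  rw [hypUKernel, indicator_of_mem h_mem, h_sub, h_div, Complex.ofReal_inv,
    Complex.inv_cpow_ofReal_nonneg (by positivity), Complex.cpow_neg, inv_inv]

theorem abs_deriv_smul_cpow_smul_hypUKernel (a b z : ℂ) {t : ℝ} (ht : 0 < t) :
    |((1 + t) ^ 2)⁻¹| • ((t / (1 + t) : ℝ) : ℂ) ^ (a - 1) • hypUKernel b z (t / (1 + t)) =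
      Complex.exp (-z * t) * (t : ℂ) ^ (a - 1) * (1 + t : ℂ) ^ (b - a - 1) := by
  have h_ne : (1 + t : ℂ) ≠ 0 := by exact_mod_cast (add_pos one_pos ht).ne'
  have h_cpow : (1 + t : ℂ) ^ (b - a - 1) =
      (1 + t : ℂ) ^ b / (1 + t : ℂ) ^ (a - 1) / (1 + t : ℂ) ^ 2 := by
    rw [← Complex.cpow_ofNat, ← Complex.cpow_sub _ _ h_ne, ← Complex.cpow_sub _ _ h_ne]
    ring_nf
  rw [abs_of_pos (by positivity), Complex.ofReal_div,
    Complex.div_cpow_ofReal_nonneg ht.le (by positivity), hypUKernel_div_one_add b z ht, h_cpow,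
    Complex.real_smul, smul_eq_mul]
  push_cast
  ring

theorem mellin_hypUKernel (a b z : ℂ) :
    mellin (hypUKernel b z) a =
      ∫ t in Ioi (0 : ℝ),
        Complex.exp (-z * t) * (t : ℂ) ^ (a - 1) * (1 + t : ℂ) ^ (b - a - 1) := by
  have h_supp : ∫ u in Ioi (0 : ℝ), (u : ℂ) ^ (a - 1) • hypUKernel b z u =
      ∫ u in Ioo (0 : ℝ) 1, (u : ℂ) ^ (a - 1) • hypUKernel b z u :=
    setIntegral_eq_of_subset_of_forall_sdiff_eq_zero measurableSet_Ioi Ioo_subset_Ioi_self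
      fun u hu ↦ by rw [hypUKernel, indicator_of_notMem hu.2, smul_zero]
  rw [mellin, h_supp, ← image_div_one_add_Ioi, integral_image_eq_integral_abs_deriv_smul
    measurableSet_Ioi (fun t ht ↦ (hasDerivAt_div_one_add ?_).hasDerivWithinAt)
    injOn_div_one_add_Ioi]
  · exact setIntegral_congr_fun measurableSet_Ioi fun t ht ↦
      abs_deriv_smul_cpow_smul_hypUKernel a b z ht
  · exact (add_pos one_pos ht).ne'

theorem Gamma_mul_hypU {a : ℂ} (ha : 0 < a.re) (b z : ℂ) :
    Complex.Gamma a * hypU a b z = mellin (hypUKernel b z) a := by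
  rw [hypU, mul_inv_cancel_left₀ (Complex.Gamma_ne_zero_of_re_pos ha), mellin_hypUKernel]

theorem integral_Gamma_mul_hypU_mul_Gamma_mul_hypU (b d : ℂ) {a c z w : ℂ} (ha : 0 < a.re)
    (hc : 0 < c.re) (hz : 0 < z.re) (hw : 0 < w.re) :
    ∫ τ : ℝ, (Complex.Gamma (a - τ * Complex.I) * hypU (a - τ * Complex.I) b z) *
        (Complex.Gamma (c + τ * Complex.I) * hypU (c + τ * Complex.I) d w) =
      2 * π * (Complex.Gamma (a + c) * hypU (a + c) (b + d) (z + w)) := by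
  have h_re (s : ℂ) (hs : 0 < s.re) : 0 < (2 * (s.re : ℂ)).re := by simpa using hs
  have h := integral_mellin_mul_mellin
    (mellinConvergent_hypUKernel b ha hz) (mellinConvergent_norm_hypUKernel_sq b (h_re a ha) hz)
    (mellinConvergent_hypUKernel d hc hw) (mellinConvergent_norm_hypUKernel_sq d (h_re c hc) hw)
  simp_rw [hypUKernel_mul] at h
  rw [Gamma_mul_hypU (by simpa using add_pos ha hc), ← h]
  congr with τ
  rw [Gamma_mul_hypU (by simpa using ha), Gamma_mul_hypU (by simpa using hc)]

end Kernel

theorem Gamma_mul_parD_mul_Gamma_mul_parD (s z w : ℂ) :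
    Complex.Gamma (3 / 4 - s) * Complex.Gamma (3 / 4 + s) *
        parD (2 * s - 1 / 2) z * parD (-2 * s - 1 / 2) w =
      (2 * 2 ^ (1 / 2 : ℂ))⁻¹ * Complex.exp (-((z ^ 2 + w ^ 2) / 4)) * (z * w) *
        ((Complex.Gamma (3 / 4 - s) * hypU (3 / 4 - s) (3 / 2) (z ^ 2 / 2)) *
          (Complex.Gamma (3 / 4 + s) * hypU (3 / 4 + s) (3 / 2) (w ^ 2 / 2))) := by
  have h_exponents :
      (2 * s - 1 / 2 - 1) / 2 + (-2 * s - 1 / 2 - 1) / 2 = -(1 / 2 : ℂ) - 1 := by ring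
  have h_two : (2 : ℂ) ^ ((2 * s - 1 / 2 - 1) / 2) * 2 ^ ((-2 * s - 1 / 2 - 1) / 2) =
      (2 * 2 ^ (1 / 2 : ℂ))⁻¹ := by
    rw [← Complex.cpow_add _ _ two_ne_zero, h_exponents, Complex.cpow_sub _ _ two_ne_zero,
      Complex.cpow_neg, Complex.cpow_one, mul_inv_rev, div_eq_mul_inv]
  have h_exp : Complex.exp (-((z ^ 2 + w ^ 2) / 4)) =
      Complex.exp (-z ^ 2 / 4) * Complex.exp (-w ^ 2 / 4) := by
    rw [← Complex.exp_add]
    ring_nf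
  have h_sub : (1 - (2 * s - 1 / 2)) / 2 = 3 / 4 - s := by ring
  have h_add : (1 - (-2 * s - 1 / 2)) / 2 = 3 / 4 + s := by ring
  rw [parD, parD, h_sub, h_add, ← h_two, h_exp]
  ring

theorem Gamma_three_halves : Complex.Gamma (3 / 2) = (√π : ℂ) / 2 := by
  have h_half : Complex.Gamma (1 / 2) = (√π : ℂ) := by
    rw [← Real.Gamma_one_half_eq, ← Complex.Gamma_ofReal]
    norm_num
  rw [show (3 / 2 : ℂ) = 1 / 2 + 1 by norm_num, Complex.Gamma_add_one _ (by norm_num), h_half]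
  ring

theorem besselK1_eq_Gamma_mul_hypU (z : ℂ) :
    besselK1 z = 4 * z * Complex.exp (-z) * (Complex.Gamma (3 / 2) * hypU (3 / 2) 3 (2 * z)) := by
  rw [besselK1, Gamma_three_halves]
  ring

/-- Addition theorem for the order-one modified Bessel function of the second kind. -/
theorem besselK1_addition (ξ η σ : ℂ) (hξ : 0 < (ξ ^ 2).re) (hη : 0 < (η ^ 2).re)
    (hσ : |σ.re| < 3 / 4) :
    ξ * η * besselK1 ((ξ ^ 2 + η ^ 2) / 4) =
      ((2 : ℂ) ^ ((1 : ℂ) / 2) * (ξ ^ 2 + η ^ 2) / ((Real.pi : ℂ) * Complex.I)) *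
        (Complex.I * ∫ τ : ℝ,
          Complex.Gamma (3 / 4 - (σ + Complex.I * τ)) *
          Complex.Gamma (3 / 4 + (σ + Complex.I * τ)) *
          parD (2 * (σ + Complex.I * τ) - 1 / 2) ξ *
          parD (-2 * (σ + Complex.I * τ) - 1 / 2) η) := by
  obtain ⟨hσ₁, hσ₂⟩ := abs_lt.1 hσ
  have h_integral := integral_Gamma_mul_hypU_mul_Gamma_mul_hypU (3 / 2) (3 / 2)
    (a := 3 / 4 - σ) (c := 3 / 4 + σ) (z := ξ ^ 2 / 2) (w := η ^ 2 / 2)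
    (by simp; linarith) (by simp; linarith) (by simpa using hξ) (by simpa using hη)
  have h_a : 3 / 4 - σ + (3 / 4 + σ) = 3 / 2 := by ring
  have h_b : (3 / 2 + 3 / 2 : ℂ) = 3 := by norm_num
  have h_z : ξ ^ 2 / 2 + η ^ 2 / 2 = 2 * ((ξ ^ 2 + η ^ 2) / 4) := by ring
  have h_sub (τ : ℝ) : 3 / 4 - (σ + Complex.I * τ) = 3 / 4 - σ - τ * Complex.I := by ring
  have h_add (τ : ℝ) : 3 / 4 + (σ + Complex.I * τ) = 3 / 4 + σ + τ * Complex.I := by ring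
  rw [h_a, h_b, h_z] at h_integral
  simp_rw [Gamma_mul_parD_mul_Gamma_mul_parD, h_sub, h_add, integral_const_mul, h_integral,
    besselK1_eq_Gamma_mul_hypU]
  field_simp
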